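/- For every odd prime p, the number of quadratic residues of p lying in [1, (p−1)/2] satisfies 4·R_b(p) ≥ p − 1; in particular R_b(p) ≥ (p−1)/4, with equality exactly when p ≡ 1 (mod 4). -/

import Mathlib

/-!
Let `χ` be the Legendre symbol modulo `p` and `H = ∑ χ(y)` over `1 ≤ y ≤ (p - 1) / 2`, so that
`2 R_b(p) = (p - 1) / 2 + H`. If `p ≡ 1 (mod 4)`, then `χ` is even and `H` is half of a complete
character sum, hence zero. If `p ≡ 3 (mod 4)`, then `χ` is odd, and computing `T = ∑ a χ(a)` with
and without the substitution `a ↦ 2a` gives Dirichlet's identity `T = χ(2) (2T + pH)`; since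
`χ(2) = ±1`, the inequality `H ≥ 0` amounts to `T ≤ 0`, which comes from the class number formula
`√p L(1, χ) = -(π / p) T`.

* `L(1, χ) ≥ 0` because `∑_{d ∣ n} χ(d) ≥ 0` for every `n`: summing over `n ≤ x` gives
  `∑ χ(d) ⌊x / d⌋ ≥ 0`, and this sum divided by `x` tends to `L(1, χ)`.
* The formula is obtained by expanding `-log (1 - r e^{2πia/p})` and letting `r → 1`. It needs the
  Gauss sum to be `i√p` rather than `-i√p`; as in Estermann's proof, it is enough that
  `∑ sin (2πx² / p) > -√p`, and this follows by telescoping against the decreasing function `cot`.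
-/

section

open Finset Filter Topology Real

/-! ### Nonnegativity of `L(1, χ)` for real characters -/

theorem sum_zmod_eq_sum_range {M : Type*} [AddCommMonoid M] {N : ℕ} [NeZero N] (f : ZMod N → M) :
    ∑ a, f a = ∑ i ∈ range N, f i := by
  refine sum_bij' (fun a _ => a.val) (fun i _ => (i : ZMod N)) ?_ ?_ ?_ ?_ ?_
  · exact fun a _ => mem_range.2 a.val_lt
  · exact fun _ _ => mem_univ _
  · exact fun a _ => a.natCast_zmod_val
  · exact fun i hi => ZMod.val_cast_of_lt (mem_range.1 hi)
  · exact fun a _ => by rw [a.natCast_zmod_val]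

theorem abs_sum_range_mul_le_of_antitone {c b : ℕ → ℝ} {D : ℝ}
    (hc : ∀ n, |∑ i ∈ range n, c i| ≤ D) (hb : Antitone b) (hb₀ : ∀ n, 0 ≤ b n) (n : ℕ) :
    |∑ i ∈ range n, c i * b i| ≤ D * b 0 := by
  suffices key : |∑ i ∈ range n, c i * b i - (∑ i ∈ range n, c i) * b n| ≤ D * (b 0 - b n) by
    have hlast : |(∑ i ∈ range n, c i) * b n| ≤ D * b n := by
      rw [abs_mul, abs_of_nonneg (hb₀ n)]
      exact mul_le_mul_of_nonneg_right (hc n) (hb₀ n)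
    rw [abs_le] at key hlast ⊢
    constructor <;> linarith
  induction n with
  | zero => simp
  | succ n ih =>
    have hstep : |(∑ i ∈ range (n + 1), c i) * (b n - b (n + 1))| ≤ D * (b n - b (n + 1)) := by
      have hdecr : 0 ≤ b n - b (n + 1) := sub_nonneg.2 (hb n.le_succ)
      rw [abs_mul, abs_of_nonneg hdecr]
      exact mul_le_mul_of_nonneg_right (hc _) hdecr
    calc _ = |(∑ i ∈ range n, c i * b i - (∑ i ∈ range n, c i) * b n)
            + (∑ i ∈ range (n + 1), c i) * (b n - b (n + 1))| := by
          simp only [sum_range_succ]; ring_nf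
      _ ≤ D * (b 0 - b n) + D * (b n - b (n + 1)) := (abs_add_le _ _).trans (add_le_add ih hstep)
      _ = _ := by ring

section RealCharacter

variable {N : ℕ} (χ : DirichletCharacter ℝ N)

theorem isQuadratic_of_real [NeZero N] : χ.IsQuadratic := by
  intro a
  by_cases ha : IsUnit a
  · obtain ⟨u, rfl⟩ := ha
    have h : |χ u| = 1 := χ.unit_norm_eq_one u
    exact .inr (eq_or_eq_neg_of_abs_eq h)
  · exact .inl (χ.map_nonunit ha)

open scoped ComplexOrder in
theorem sum_divisors_nonneg [NeZero N] (n : ℕ) : 0 ≤ ∑ d ∈ n.divisors, χ d := by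
  have hsq : (χ.ringHomComp Complex.ofRealHom) ^ 2 = 1 :=
    MulChar.isQuadratic_iff_sq_eq_one.1 ((isQuadratic_of_real χ).comp _)
  have h := DirichletCharacter.zetaMul_nonneg hsq n
  rw [DirichletCharacter.zetaMul, ArithmeticFunction.coe_zeta_mul_apply] at h
  suffices hcast : ((∑ d ∈ n.divisors, χ d : ℝ) : ℂ) =
      ∑ d ∈ n.divisors, toArithmeticFunction (χ.ringHomComp Complex.ofRealHom ·) d by
    rwa [← hcast, Complex.zero_le_real] at h
  push_cast
  refine sum_congr rfl fun d hd => ?_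
  simp [toArithmeticFunction, (Nat.pos_of_mem_divisors hd).ne']

variable {χ} [NeZero N]

theorem abs_sum_range_add_le (hχ : χ ≠ 1) (a : ZMod N) (n : ℕ) :
    |∑ i ∈ range n, χ (a + i)| ≤ N := by
  have hperiod : Function.Periodic (fun n => ∑ i ∈ range n, χ (a + i)) N := by
    intro n
    have hzero : ∑ i ∈ range N, χ (a + i) = 0 := by
      rw [← sum_zmod_eq_sum_range (fun j => χ (a + j)), ← MulChar.sum_eq_zero_of_ne_one hχ]
      exact Equiv.sum_comp (Equiv.addLeft a) χ
    simp only [add_comm n N, sum_range_add, hzero, zero_add, Nat.cast_add, ZMod.natCast_self]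
  calc |∑ i ∈ range n, χ (a + i)| = |∑ i ∈ range (n % N), χ (a + i)| := by
        rw [hperiod.map_mod_nat n]
    _ ≤ ∑ i ∈ range (n % N), |χ (a + i)| := abs_sum_le_sum_abs _ _
    _ ≤ ∑ i ∈ range (n % N), 1 := sum_le_sum fun i _ => χ.norm_le_one (a + i)
    _ ≤ N := by simpa using (Nat.mod_lt n (NeZero.pos N)).le

theorem exists_tendsto_sum_div (hχ : χ ≠ 1) :
    ∃ L, Tendsto (fun n => ∑ i ∈ range n, χ i / i) atTop (𝓝 L) := by
  have hcauchy : CauchySeq fun n => ∑ i ∈ range n, (1 / ((i : ℝ) + 1)) • χ (1 + i) :=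
    Antitone.cauchySeq_series_mul_of_tendsto_zero_of_bounded
      (fun _ _ hij => Nat.one_div_le_one_div hij) tendsto_one_div_add_atTop_nhds_zero_nat
      (abs_sum_range_add_le hχ 1)
  obtain ⟨L, hL⟩ := cauchySeq_tendsto_of_complete hcauchy
  refine ⟨L, (tendsto_add_atTop_iff_nat 1).1 (hL.congr fun n => ?_)⟩
  simp [sum_range_succ', add_comm, div_eq_inv_mul]

theorem sum_range_mul_div_nonneg (χ : DirichletCharacter ℝ N) (x : ℕ) :
    0 ≤ ∑ d ∈ range (x + 1), χ d * (x / d : ℕ) := by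
  let f : ArithmeticFunction ℝ := toArithmeticFunction (χ ·)
  have hf {d : ℕ} (hd : 0 < d) : f d = χ d := by simp [f, toArithmeticFunction, hd.ne']
  calc 0 ≤ ∑ n ∈ Ioc 0 x, (f * .zeta) n := by
        refine sum_nonneg fun n _ => ?_
        rw [ArithmeticFunction.coe_mul_zeta_apply,
          sum_congr rfl fun d hd => hf (Nat.pos_of_mem_divisors hd)]
        exact sum_divisors_nonneg χ n
    _ = ∑ d ∈ Ioc 0 x, χ d * (x / d : ℕ) := by
        rw [ArithmeticFunction.sum_Ioc_mul_zeta_eq_sum]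
        exact sum_congr rfl fun d hd => by rw [hf (mem_Ioc.1 hd).1]
    _ = ∑ d ∈ range (x + 1), χ d * (x / d : ℕ) := by
        refine sum_subset (fun d => by grind) fun d hd hd' => ?_
        obtain rfl : d = 0 := by grind
        simp

theorem tendsto_natCast_div_div (d : ℕ) :
    Tendsto (fun x : ℕ => ((x / d : ℕ) / x : ℝ)) atTop (𝓝 (d : ℝ)⁻¹) := by
  have h := (tendsto_nat_floor_mul_div_atTop (inv_nonneg.2 (Nat.cast_nonneg (α := ℝ) d))).comp
    tendsto_natCast_atTop_atTop
  refine h.congr fun x => ?_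
  simp only [Function.comp_apply, inv_mul_eq_div, Nat.floor_div_eq_div]

theorem neg_div_le_sum_range_div (hχ : χ ≠ 1) {M : ℕ} (hM : 0 < M) :
    -(N / M : ℝ) ≤ ∑ i ∈ range M, χ i / i := by
  have hlim : Tendsto (fun x : ℕ => ∑ i ∈ range M, χ i * ((x / i : ℕ) / x : ℝ)) atTop
      (𝓝 (∑ i ∈ range M, χ i / i)) :=
    tendsto_finsetSum _ fun i _ => by
      simpa only [div_eq_mul_inv (χ _)] using (tendsto_natCast_div_div i).const_mul (χ i)
  refine ge_of_tendsto hlim ?_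
  filter_upwards [eventually_ge_atTop M] with x hx
  have hx₀ : (0 : ℝ) < x := by exact_mod_cast hM.trans_le hx
  have htail : |∑ i ∈ range (x + 1 - M), χ (M + i) * (x / (M + i) : ℕ)| ≤ N * (x / M : ℕ) :=
    abs_sum_range_mul_le_of_antitone (b := fun i => ((x / (M + i) : ℕ) : ℝ))
      (abs_sum_range_add_le hχ M)
      (fun i j hij => Nat.cast_le.2 (Nat.div_le_div_left (by omega) (by omega)))
      (fun i => Nat.cast_nonneg _) _
  have hsplit := sum_range_mul_div_nonneg χ x
  rw [← Nat.add_sub_of_le (Nat.le_add_right_of_le (k := 1) hx), sum_range_add] at hsplit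
  push_cast at hsplit
  have hdiv : (N * (x / M : ℕ) : ℝ) ≤ N / M * x := by
    calc (N * (x / M : ℕ) : ℝ) ≤ N * (x / M : ℝ) := by gcongr; exact Nat.cast_div_le
      _ = N / M * x := by ring
  simp only [mul_div_assoc', ← sum_div]
  rw [le_div_iff₀ hx₀]
  linarith [(abs_le.1 htail).2]

theorem nonneg_of_tendsto_sum_div (hχ : χ ≠ 1) {L : ℝ}
    (hL : Tendsto (fun n => ∑ i ∈ range n, χ i / i) atTop (𝓝 L)) : 0 ≤ L := by
  have hzero : Tendsto (fun M : ℕ => -(N / M : ℝ)) atTop (𝓝 0) := by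
    simpa using (tendsto_const_div_atTop_nhds_zero_nat (N : ℝ)).neg
  exact le_of_tendsto_of_tendsto hzero hL
    ((eventually_gt_atTop 0).mono fun M => neg_div_le_sum_range_div hχ)

end RealCharacter

/-! ### The sign of the quadratic Gauss sum -/

theorem two_mul_sin_eq (α : ℝ) {θ : ℝ} (hθ : sin θ ≠ 0) :
    2 * sin α = sin α - sin (α + 2 * θ) + cot θ * (cos α - cos (α + 2 * θ)) := by
  rw [cot_eq_cos_div_sin, sin_add, cos_add, sin_two_mul, cos_two_mul']
  field_simp
  linear_combination (cos α * cos θ - sin α * sin θ) * sin_sq_add_cos_sq θ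

theorem cot_le_cot_of_le {a b : ℝ} (ha : 0 < a) (hab : a ≤ b) (hb : b < π) : cot b ≤ cot a := by
  have hsin_a : 0 < sin a := sin_pos_of_pos_of_lt_pi ha (hab.trans_lt hb)
  have hsin_b : 0 < sin b := sin_pos_of_pos_of_lt_pi (ha.trans_le hab) hb
  have hsin_sub : 0 ≤ sin (b - a) := sin_nonneg_of_nonneg_of_le_pi (by linarith) (by linarith)
  rw [cot_eq_cos_div_sin, cot_eq_cos_div_sin, div_le_div_iff₀ hsin_b hsin_a]
  rw [sin_sub] at hsin_sub
  linarith

theorem cot_lt_one_div {φ : ℝ} (hφ : 0 < φ) (hφπ : φ < π) : cot φ < 1 / φ := by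
  have hsin : 0 < sin φ := sin_pos_of_pos_of_lt_pi hφ hφπ
  rw [cot_eq_cos_div_sin, div_lt_div_iff₀ hsin hφ, one_mul]
  rcases le_or_gt (π / 2) φ with hobtuse | hacute
  · have hcos : cos φ ≤ 0 := cos_nonpos_of_pi_div_two_le_of_le hobtuse (by linarith)
    exact (mul_nonpos_of_nonpos_of_nonneg hcos hφ.le).trans_lt hsin
  · have hcos : 0 < cos φ := cos_pos_of_mem_Ioo ⟨by linarith, hacute⟩
    have htan := lt_tan hφ hacute
    rwa [tan_eq_sin_div_cos, lt_div_iff₀ hcos, mul_comm] at htan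

/- With `θ = π (2n + 1) / t`, the identity `two_mul_sin_eq` turns `2 sin (2πn² / t)` into a
difference of sines plus `cot θ` times a difference of cosines; as `cot θ` decreases with `n`,
replacing it by its last value only lowers the sum. -/
theorem cot_mul_sub_sin_le_two_mul_sum_sin_sq {t : ℝ} (B : ℕ) (hB : (2 * B + 1 : ℝ) < t) :
    cot (π * (2 * B + 1) / t) * (1 - cos (2 * π * (B + 1) ^ 2 / t)) -
        sin (2 * π * (B + 1) ^ 2 / t) ≤
      2 * ∑ s ∈ range (B + 1), sin (2 * π * (s : ℝ) ^ 2 / t) := by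
  have ht : 0 < t := lt_of_le_of_lt (by positivity) hB
  have hstep (n : ℕ) (hn : (2 * n + 1 : ℝ) < t) :
      2 * sin (2 * π * n ^ 2 / t) =
        sin (2 * π * n ^ 2 / t) - sin (2 * π * (n + 1) ^ 2 / t) +
        cot (π * (2 * n + 1) / t) * (cos (2 * π * n ^ 2 / t) - cos (2 * π * (n + 1) ^ 2 / t)) := by
    have hlt : π * (2 * n + 1) / t < π := by rw [div_lt_iff₀ ht]; gcongr
    rw [two_mul_sin_eq _ (sin_pos_of_pos_of_lt_pi (by positivity) hlt).ne']
    ring_nf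
  induction B with
  | zero =>
    have h0 := hstep 0 hB
    simp only [Nat.cast_zero] at h0 ⊢
    norm_num at h0 ⊢
    linarith
  | succ n ih =>
    push_cast at hB ⊢
    have hprev := ih (by linarith)
    have hnext := hstep (n + 1) (by push_cast; exact hB)
    push_cast at hnext
    have hcot : cot (π * (2 * (n + 1) + 1) / t) ≤ cot (π * (2 * n + 1) / t) :=
      cot_le_cot_of_le (by positivity) (by gcongr; linarith)
        (by rw [div_lt_iff₀ ht]; gcongr)
    have hmul := mul_le_mul_of_nonneg_right hcot
      (sub_nonneg.2 (cos_le_one (2 * π * ((n : ℝ) + 1) ^ 2 / t)))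
    rw [sum_range_succ]
    push_cast
    linarith

theorem sin_sq_nonneg_of_sq_le {p s : ℕ} (hp : p % 4 = 3) (hs : ((p : ℝ) - 2 * s) ^ 2 ≤ p) :
    0 ≤ sin (2 * π * (s : ℝ) ^ 2 / p) := by
  obtain ⟨k, rfl⟩ : ∃ k, p = 4 * k + 3 := ⟨p / 4, by omega⟩
  set t : ℝ := ((4 * k + 3 : ℕ) : ℝ) with ht
  have ht₀ : 0 < t := by positivity
  have hangle : 2 * π * (s : ℝ) ^ 2 / t =
      π * (t - 2 * s) ^ 2 / (2 * t) + π / 2 + ((s - k - 1 : ℤ) : ℝ) * (2 * π) := by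
    have hk : (k : ℝ) = (t - 3) / 4 := by rw [ht]; push_cast; ring
    push_cast
    rw [hk]
    field_simp
    ring
  rw [hangle, sin_add_int_mul_two_pi, sin_add_pi_div_two]
  refine cos_nonneg_of_neg_pi_div_two_le_of_le ?_ ?_
  · linarith [pi_pos, show 0 ≤ π * (t - 2 * s) ^ 2 / (2 * t) by positivity]
  · calc π * (t - 2 * s) ^ 2 / (2 * t) ≤ π * t / (2 * t) := by gcongr
      _ = π / 2 := by field_simp

theorem neg_sqrt_div_two_lt_cot {t u : ℝ} (hu : 2 ≤ u) (hut : u < t) (ht : √t < u + 1) :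
    -(√t / 2) < cot (π - π * u / t) := by
  have ht₀ : 0 < t := by linarith
  have hpos : 0 < π * u / t := by positivity
  have hlt : π * u / t < π := by rw [div_lt_iff₀ ht₀]; gcongr
  have hcot : cot (π - π * u / t) = -cot (π * u / t) := by
    rw [cot_eq_cos_div_sin, cot_eq_cos_div_sin, cos_pi_sub, sin_pi_sub, neg_div]
  rw [hcot, neg_lt_neg_iff]
  calc cot (π * u / t) < 1 / (π * u / t) := cot_lt_one_div hpos hlt
    _ = √t * √t / (π * u) := by rw [one_div_div, mul_self_sqrt ht₀.le]
    _ ≤ √t / 2 := by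
      rw [div_le_div_iff₀ (by positivity) two_pos, mul_assoc]
      exact mul_le_mul_of_nonneg_left (by nlinarith [pi_gt_three]) (sqrt_nonneg t)

theorem neg_lt_mul_one_sub_cos {a c : ℝ} (ha : 0 < a) (hc : -(a / 2) < c) (x : ℝ) :
    -a < c * (1 - cos x) := by
  have hx := cos_le_one x
  have hx' := neg_one_le_cos x
  rcases le_or_gt 0 c with hnonneg | hneg
  · exact (neg_lt_zero.2 ha).trans_le (mul_nonneg hnonneg (sub_nonneg.2 hx))
  · nlinarith

theorem exists_odd_sq_le_lt {n : ℕ} (hn : 0 < n) :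
    ∃ v : ℕ, (2 * v + 1) ^ 2 ≤ n ∧ n < (2 * v + 3) ^ 2 := by
  have hsqrt : 0 < n.sqrt := Nat.sqrt_pos.2 hn
  refine ⟨(n.sqrt - 1) / 2, ?_, ?_⟩
  · exact (Nat.pow_le_pow_left (by omega) 2).trans (Nat.sqrt_le' n)
  · exact (Nat.lt_succ_sqrt' n).trans_le (Nat.pow_le_pow_left (by omega) 2)

theorem neg_sqrt_lt_two_mul_sum_sin_sq {p : ℕ} (hp : p % 4 = 3) :
    -√p < 2 * ∑ s ∈ range ((p + 1) / 2), sin (2 * π * (s : ℝ) ^ 2 / p) := by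
  obtain ⟨v, hv, hv'⟩ := exists_odd_sq_le_lt (show 0 < p by omega)
  obtain ⟨B, hB⟩ : ∃ B : ℕ, p = 2 * (B + 1) + (2 * v + 1) := ⟨(p - 2 * v - 3) / 2, by
    have : 2 * v + 1 < p := by
      rcases v.eq_zero_or_pos with rfl | hv₀
      · omega
      · nlinarith
    omega⟩
  have hpB : (p : ℝ) = 2 * (B + 1) + (2 * v + 1) := by rw [hB]; push_cast; ring
  have hp₀ : (0 : ℝ) < p := by rw [hpB]; positivity
  have htail (s : ℕ) (hs : B + 1 ≤ s) (hs' : 2 * s ≤ p) :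
      0 ≤ sin (2 * π * (s : ℝ) ^ 2 / p) := by
    refine sin_sq_nonneg_of_sq_le hp ?_
    obtain ⟨d, hd⟩ := Nat.exists_eq_add_of_le hs'
    have hpd : (p : ℝ) - 2 * s = d := by rw [hd]; push_cast; ring
    rw [hpd]
    exact_mod_cast (Nat.pow_le_pow_left (by omega) 2).trans hv
  have hfirst : sin (2 * π * ((B : ℝ) + 1) ^ 2 / p) ≤
      ∑ j ∈ range (v + 1), sin (2 * π * ((B + 1 + j : ℕ) : ℝ) ^ 2 / p) := by
    have := single_le_sum (f := fun j => sin (2 * π * ((B + 1 + j : ℕ) : ℝ) ^ 2 / p))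
      (fun j hj => htail _ (Nat.le_add_right _ _) (by grind)) (mem_range.2 v.succ_pos)
    exact_mod_cast this
  have hfirst_nonneg := htail (B + 1) le_rfl (by omega)
  have hhead := cot_mul_sub_sin_le_two_mul_sum_sin_sq (t := p) B (by rw [hpB]; linarith)
  have hcot : -(√p / 2) < cot (π * (2 * B + 1) / p) := by
    have hsqrt : √(p : ℝ) < 2 * v + 3 := by rw [sqrt_lt' (by positivity)]; exact_mod_cast hv'
    have hangle : π * (2 * B + 1) / p = π - π * (2 * v + 2) / p := by
      field_simp
      linarith
    rw [hangle]
    exact neg_sqrt_div_two_lt_cot (by linarith [v.cast_nonneg (α := ℝ)]) (by linarith)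
      (by linarith)
  have hprod := neg_lt_mul_one_sub_cos (sqrt_pos.2 hp₀) hcot (2 * π * (B + 1) ^ 2 / p)
  rw [show (p + 1) / 2 = (B + 1) + (v + 1) by omega, sum_range_add]
  push_cast at hfirst_nonneg
  linarith

theorem sum_zmod_eq_add_sum_Icc {M : Type*} [AddCommMonoid M] {N : ℕ} [NeZero N] (hN : Odd N)
    (f : ZMod N → M) :
    ∑ a, f a = f 0 + ∑ y ∈ Icc 1 ((N - 1) / 2), (f y + f (-y)) := by
  obtain ⟨h, rfl⟩ := hN
  have hreflect : ∑ y ∈ Ico 1 (h + 1), f (-y) = ∑ y ∈ Ico (h + 1) (2 * h + 1), f y := by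
    have := sum_Ico_reflect (fun y => f y) 1 (show h + 1 ≤ 2 * h + 1 + 1 by omega)
    rw [show 2 * h + 1 + 1 - (h + 1) = h + 1 by omega, Nat.add_sub_cancel] at this
    rw [← this]
    refine sum_congr rfl fun y hy => ?_
    rw [Nat.cast_sub (by grind), ZMod.natCast_self, zero_sub]
  rw [sum_zmod_eq_sum_range, range_eq_Ico, sum_eq_sum_Ico_succ_bot (by omega), Nat.cast_zero,
    Nat.add_sub_cancel, Nat.mul_div_cancel_left _ two_pos, ← Ico_add_one_right_eq_Icc,
    sum_add_distrib, hreflect, zero_add, sum_Ico_consecutive _ (by omega) (by omega)]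

theorem gaussSum_quadraticChar_eq_sum_sq {F R : Type*} [Field F] [Fintype F] [DecidableEq F]
    [CommRing R] [IsDomain R] (hF : ringChar F ≠ 2) {ψ : AddChar F R} (hψ : ψ ≠ 1) :
    gaussSum ((quadraticChar F).ringHomComp (Int.castRingHom R)) ψ = ∑ x, ψ (x ^ 2) := by
  have hcard (a : F) : (#{x : F | x ^ 2 = a} : R) = (quadraticChar F a : R) + 1 := by
    have := quadraticChar_card_sqrts hF a
    rw [Set.toFinset_ofPred] at this
    exact_mod_cast congrArg (Int.cast : ℤ → R) this
  calc gaussSum ((quadraticChar F).ringHomComp (Int.castRingHom R)) ψ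
      = ∑ a, (quadraticChar F a : R) * ψ a + ∑ a, ψ a := by
        rw [AddChar.sum_eq_zero_of_ne_one hψ, add_zero]; rfl
    _ = ∑ a, ∑ x with x ^ 2 = a, ψ (x ^ 2) := by
        rw [← sum_add_distrib]
        refine sum_congr rfl fun a _ => ?_
        rw [sum_congr rfl fun x hx => by rw [(mem_filter.1 hx).2], sum_const, nsmul_eq_mul, hcard]
        ring
    _ = ∑ x, ψ (x ^ 2) := sum_fiberwise univ (fun x => x ^ 2) fun x => ψ (x ^ 2)

theorem stdAddChar_natCast {N : ℕ} [NeZero N] (n : ℕ) :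
    ZMod.stdAddChar (n : ZMod N) = Complex.exp ((2 * π * (n / N) : ℝ) * Complex.I) := by
  rw [← Int.cast_natCast, ZMod.stdAddChar_coe]
  push_cast
  ring_nf

theorem stdAddChar_natCast_im {N : ℕ} [NeZero N] (n : ℕ) :
    (ZMod.stdAddChar (n : ZMod N)).im = sin (2 * π * n / N) := by
  rw [stdAddChar_natCast, Complex.exp_ofReal_mul_I_im, mul_div_assoc]

theorem im_sum_stdAddChar_sq {N : ℕ} [NeZero N] (hN : Odd N) :
    (∑ x : ZMod N, ZMod.stdAddChar (x ^ 2)).im =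
      2 * ∑ s ∈ range ((N + 1) / 2), sin (2 * π * (s : ℝ) ^ 2 / N) := by
  have him (y : ℕ) : (ZMod.stdAddChar ((y : ZMod N) ^ 2)).im = sin (2 * π * (y : ℝ) ^ 2 / N) := by
    exact_mod_cast stdAddChar_natCast_im (y ^ 2)
  have hhalf : (N + 1) / 2 = (N - 1) / 2 + 1 := by grind
  rw [Complex.im_sum, sum_zmod_eq_add_sum_Icc hN, range_eq_Ico, hhalf,
    sum_eq_sum_Ico_succ_bot (Nat.succ_pos _), ← Ico_add_one_right_eq_Icc]
  simp only [even_two, Even.neg_pow, him]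
  simp [mul_sum, two_mul]

/-- The Legendre symbol modulo `p`, as a Dirichlet character with values in `R`. -/
noncomputable def legendreChar (R : Type*) [CommRing R] (p : ℕ) [Fact p.Prime] :
    DirichletCharacter R p :=
  (quadraticChar (ZMod p)).ringHomComp (Int.castRingHom R)

section Legendre

variable {p : ℕ} [Fact p.Prime]

theorem legendreChar_apply {R : Type*} [CommRing R] (a : ZMod p) :
    legendreChar R p a = (quadraticChar (ZMod p) a : R) := rfl

theorem legendreChar_ne_one (R : Type*) [CommRing R] [CharZero R] (hp : p ≠ 2) :
    legendreChar R p ≠ 1 :=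
  (MulChar.ringHomComp_ne_one_iff Int.cast_injective).2
    (quadraticChar_ne_one (by rwa [ZMod.ringChar_zmod_n]))

theorem legendreChar_isQuadratic (R : Type*) [CommRing R] : (legendreChar R p).IsQuadratic :=
  (quadraticChar_isQuadratic _).comp _

theorem legendreChar_neg_one (R : Type*) [CommRing R] (hp : p ≠ 2) :
    legendreChar R p (-1) = (ZMod.χ₄ p : R) := by
  rw [legendreChar_apply, quadraticChar_neg_one (by rwa [ZMod.ringChar_zmod_n]), ZMod.card]

theorem legendreChar_even (R : Type*) [CommRing R] (hp : p % 4 = 1) : (legendreChar R p).Even := by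
  rw [DirichletCharacter.Even, legendreChar_neg_one R (by omega), ZMod.χ₄_nat_one_mod_four hp,
    Int.cast_one]

theorem legendreChar_odd (R : Type*) [CommRing R] (hp : p % 4 = 3) : (legendreChar R p).Odd := by
  rw [DirichletCharacter.Odd, legendreChar_neg_one R (by omega), ZMod.χ₄_nat_three_mod_four hp,
    Int.cast_neg, Int.cast_one]

theorem gaussSum_legendreChar (hp : p % 4 = 3) :
    gaussSum (legendreChar ℂ p) ZMod.stdAddChar = Complex.I * (√p : ℝ) := by
  have hp₂ : p ≠ 2 := by omega
  have hψ := ZMod.isPrimitive_stdAddChar p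
  have hsq : gaussSum (legendreChar ℂ p) ZMod.stdAddChar ^ 2 = (Complex.I * (√p : ℝ)) ^ 2 := by
    calc gaussSum (legendreChar ℂ p) ZMod.stdAddChar ^ 2
        = legendreChar ℂ p (-1) * Fintype.card (ZMod p) :=
          gaussSum_sq (legendreChar_ne_one ℂ hp₂) (legendreChar_isQuadratic ℂ) hψ
      _ = (Complex.I * (√p : ℝ)) ^ 2 := by
          rw [(legendreChar_odd ℂ hp : legendreChar ℂ p (-1) = -1), ZMod.card, mul_pow,
            Complex.I_sq, ← Complex.ofReal_pow, sq_sqrt p.cast_nonneg, Complex.ofReal_natCast]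
  have him : -√p < (gaussSum (legendreChar ℂ p) ZMod.stdAddChar).im := by
    rw [legendreChar, gaussSum_quadraticChar_eq_sum_sq (by rwa [ZMod.ringChar_zmod_n]),
      im_sum_stdAddChar_sq (Nat.odd_iff.2 (by omega))]
    · exact neg_sqrt_lt_two_mul_sum_sin_sq hp
    · simpa using hψ (one_ne_zero (α := ZMod p))
  refine (sq_eq_sq_iff_eq_or_eq_neg.1 hsq).resolve_right fun hneg => ?_
  rw [hneg] at him
  simp at him

end Legendre

/-! ### The class number formula -/

theorem isPrimitive_of_prime {R : Type*} [CommMonoidWithZero R] {p : ℕ} (hp : p.Prime)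
    {χ : DirichletCharacter R p} (hχ : χ ≠ 1) : χ.IsPrimitive := by
  have : NeZero p := ⟨hp.ne_zero⟩
  exact (hp.eq_one_or_self_of_dvd _ χ.conductor_dvd_level).resolve_left
    (mt χ.eq_one_iff_conductor_eq_one.2 hχ)

theorem hasSum_inv_mul_gaussSum_mul_pow_div {N : ℕ} [NeZero N] {χ : DirichletCharacter ℂ N}
    (hχ : χ.IsPrimitive) {z : ℂ} (hz : ‖z‖ < 1) :
    HasSum (fun n : ℕ => χ⁻¹ n * gaussSum χ ZMod.stdAddChar * (z ^ n / n))
      (∑ a, χ a * -Complex.log (1 - z * ZMod.stdAddChar a)) := by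
  have hlog (a : ZMod N) : HasSum (fun n : ℕ => χ a * ((z * ZMod.stdAddChar a) ^ n / n))
      (χ a * -Complex.log (1 - z * ZMod.stdAddChar a)) :=
    (Complex.hasSum_taylorSeries_neg_log (by simpa [AddChar.norm_apply] using hz)).mul_left _
  refine (hasSum_sum fun a _ => hlog a).congr_fun fun n => ?_
  rw [← gaussSum_mulShift_of_isPrimitive _ hχ, gaussSum, sum_mul]
  refine sum_congr rfl fun a _ => ?_
  rw [AddChar.mulShift_apply, ← nsmul_eq_mul, AddChar.map_nsmul_eq_pow]
  ring

theorem arg_one_sub_exp_mul_I {φ : ℝ} (hφ : 0 < φ) (hφ' : φ < 2 * π) :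
    Complex.arg (1 - Complex.exp (φ * Complex.I)) = (φ - π) / 2 := by
  have hpolar (θ : ℂ) : 1 - Complex.exp (2 * θ * Complex.I) = 2 * Complex.sin θ *
      (Complex.cos (θ - π / 2) + Complex.sin (θ - π / 2) * Complex.I) := by
    rw [Complex.exp_mul_I, Complex.cos_two_mul, Complex.sin_two_mul, Complex.cos_sub_pi_div_two,
      Complex.sin_sub_pi_div_two]
    linear_combination -2 * Complex.sin_sq_add_cos_sq θ
  have hsin : 0 < 2 * sin (φ / 2) :=
    mul_pos two_pos (sin_pos_of_pos_of_lt_pi (by linarith) (by linarith))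
  have harg := Complex.arg_mul_cos_add_sin_mul_I hsin (θ := φ / 2 - π / 2)
    ⟨by linarith, by linarith⟩
  rw [sub_div, ← harg, ← mul_div_cancel₀ (φ : ℂ) two_ne_zero, hpolar (φ / 2)]
  push_cast
  rfl

theorem arg_one_sub_stdAddChar {N : ℕ} [NeZero N] {a : ZMod N} (ha : a ≠ 0) :
    (1 - ZMod.stdAddChar a).arg = π * (a.val / N - 1 / 2) := by
  have hN : (0 : ℝ) < N := Nat.cast_pos.2 (NeZero.pos N)
  have hpos : (0 : ℝ) < a.val := Nat.cast_pos.2 (ZMod.val_pos.2 ha)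
  have hlt : (a.val : ℝ) / N < 1 := (div_lt_one hN).2 (Nat.cast_lt.2 a.val_lt)
  have hexp : ZMod.stdAddChar a = Complex.exp ((2 * π * (a.val / N) : ℝ) * Complex.I) := by
    simpa only [ZMod.natCast_zmod_val] using stdAddChar_natCast (N := N) a.val
  rw [hexp, arg_one_sub_exp_mul_I (by positivity) (mul_lt_of_lt_one_right (by positivity) hlt)]
  ring

theorem tendsto_arg_one_sub_mul_stdAddChar {N : ℕ} [NeZero N] {a : ZMod N} (ha : a ≠ 0) :
    Tendsto (fun r : ℝ => (1 - r * ZMod.stdAddChar a : ℂ).arg) (𝓝[<] 1)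
      (𝓝 (π * (a.val / N - 1 / 2))) := by
  have hslit : 1 - ZMod.stdAddChar a ∈ Complex.slitPlane := by
    refine Complex.mem_slitPlane_iff_arg.2 ⟨?_, ?_⟩
    · have : (a.val : ℝ) / N < 1 :=
        (div_lt_one (Nat.cast_pos.2 (NeZero.pos N))).2 (Nat.cast_lt.2 a.val_lt)
      rw [arg_one_sub_stdAddChar ha]
      nlinarith [pi_pos]
    · refine sub_ne_zero.2 fun h => ha (ZMod.injective_stdAddChar ?_)
      rw [← h, AddChar.map_zero_eq_one]
  have hcont : ContinuousAt (fun r : ℝ => (1 - r * ZMod.stdAddChar a : ℂ).arg) 1 :=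
    ContinuousAt.comp (f := fun r : ℝ => (1 - r * ZMod.stdAddChar a : ℂ))
      (Complex.continuousAt_arg (by simpa using hslit)) (by fun_prop)
  simpa [arg_one_sub_stdAddChar ha] using hcont.tendsto.mono_left nhdsWithin_le_nhds

section ClassNumber

variable {p : ℕ} [Fact p.Prime]

theorem hasSum_sqrt_mul_legendreChar_div_mul_pow (hp : p % 4 = 3) {r : ℝ} (hr : |r| < 1) :
    HasSum (fun n : ℕ => √p * (legendreChar ℝ p n / n * r ^ n))
      (∑ a, legendreChar ℝ p a * -(1 - r * ZMod.stdAddChar a : ℂ).arg) := by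
  have hreal (a : ZMod p) : legendreChar ℂ p a = (legendreChar ℝ p a : ℝ) := by
    simp only [legendreChar_apply, Complex.ofReal_intCast]
  have hχ : (legendreChar ℂ p).IsPrimitive :=
    isPrimitive_of_prime Fact.out (legendreChar_ne_one ℂ (by omega))
  have hsum := Complex.hasSum_im
    (hasSum_inv_mul_gaussSum_mul_pow_div hχ (z := r) (by simpa using hr))
  simp only [(legendreChar_isQuadratic ℂ).inv, gaussSum_legendreChar hp, hreal, Complex.im_sum,
    Complex.im_ofReal_mul, Complex.neg_im, Complex.log_im] at hsum
  refine hsum.congr_fun fun n => ?_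
  rw [show (legendreChar ℝ p n : ℂ) * (Complex.I * (√p : ℝ)) * ((r : ℂ) ^ n / n) =
    (√p * (legendreChar ℝ p n / n * r ^ n) : ℝ) * Complex.I by push_cast; ring,
    Complex.im_ofReal_mul, Complex.I_im, mul_one]

theorem sqrt_mul_eq_neg_pi_div_mul_sum_legendreChar (hp : p % 4 = 3) {L : ℝ}
    (hL : Tendsto (fun n => ∑ i ∈ range n, legendreChar ℝ p i / i) atTop (𝓝 L)) :
    √p * L = -(π / p) * ∑ a : ZMod p, legendreChar ℝ p a * a.val := by
  have habel : Tendsto (fun r : ℝ => √p * ∑' n : ℕ, legendreChar ℝ p n / n * r ^ n) (𝓝[<] 1)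
      (𝓝 (√p * L)) :=
    (Real.tendsto_tsum_powerSeries_nhdsWithin_lt hL).const_mul _
  have harg : Tendsto
      (fun r : ℝ => ∑ a, legendreChar ℝ p a * -(1 - r * ZMod.stdAddChar a : ℂ).arg) (𝓝[<] 1)
      (𝓝 (∑ a, legendreChar ℝ p a * -(π * (a.val / p - 1 / 2)))) := by
    refine tendsto_finsetSum _ fun a _ => ?_
    rcases eq_or_ne a 0 with rfl | ha
    · simp [MulChar.map_zero]
    · exact (tendsto_arg_one_sub_mul_stdAddChar ha).neg.const_mul _
  have heq : (fun r : ℝ => √p * ∑' n : ℕ, legendreChar ℝ p n / n * r ^ n) =ᶠ[𝓝[<] 1]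
      fun r => ∑ a, legendreChar ℝ p a * -(1 - r * ZMod.stdAddChar a : ℂ).arg := by
    filter_upwards [Ioo_mem_nhdsLT (neg_lt_self one_pos)] with r hr
    rw [← tsum_mul_left]
    exact (hasSum_sqrt_mul_legendreChar_div_mul_pow hp (abs_lt.2 hr)).tsum_eq
  calc √p * L = ∑ a, legendreChar ℝ p a * -(π * (a.val / p - 1 / 2)) :=
        tendsto_nhds_unique habel (harg.congr' heq.symm)
    _ = -(π / p) * ∑ a : ZMod p, legendreChar ℝ p a * a.val +
          π / 2 * ∑ a : ZMod p, legendreChar ℝ p a := by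
        rw [mul_sum, mul_sum, ← sum_add_distrib]
        exact sum_congr rfl fun a _ => by ring
    _ = -(π / p) * ∑ a : ZMod p, legendreChar ℝ p a * a.val := by
        rw [MulChar.sum_eq_zero_of_ne_one (legendreChar_ne_one ℝ (by omega)), mul_zero, add_zero]

theorem sum_legendreChar_mul_val_nonpos (hp : p % 4 = 3) :
    ∑ a : ZMod p, legendreChar ℝ p a * a.val ≤ 0 := by
  have hχ : legendreChar ℝ p ≠ 1 := legendreChar_ne_one ℝ (by omega)
  obtain ⟨L, hL⟩ := exists_tendsto_sum_div hχ
  have hp₀ : (0 : ℝ) < p := Nat.cast_pos.2 (NeZero.pos p)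
  have hnonneg : 0 ≤ √p * L := mul_nonneg (sqrt_nonneg _) (nonneg_of_tendsto_sum_div hχ hL)
  rw [sqrt_mul_eq_neg_pi_div_mul_sum_legendreChar hp hL] at hnonneg
  exact nonpos_of_mul_nonneg_right hnonneg (neg_neg_of_pos (div_pos pi_pos hp₀))

end ClassNumber

/-! ### Half sums and the count of residues -/

section Folding

variable {R : Type*} [CommRing R] {N : ℕ}

theorem cast_val_neg_natCast {m : ℕ} (hm : 0 < m) (hmN : m ≤ N) :
    (((-(m : ZMod N)).val : ℕ) : R) = N - m := by
  rw [← Nat.cast_sub hmN, ← zero_sub, ← ZMod.natCast_self, ← Nat.cast_sub hmN,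
    ZMod.val_cast_of_lt (Nat.sub_lt (hm.trans_le hmN) hm)]

variable [NeZero N]

theorem sum_mul_val_eq_of_odd (hN : Odd N) {χ : DirichletCharacter R N} (hχ : χ.Odd) :
    ∑ a : ZMod N, χ a * a.val =
      χ 2 * (2 * ∑ a : ZMod N, χ a * a.val + N * ∑ y ∈ Icc 1 ((N - 1) / 2), χ y) := by
  have hfold : ∑ a : ZMod N, χ a * a.val =
      ∑ y ∈ Icc 1 ((N - 1) / 2), χ y * (2 * y - N : R) := by
    rw [sum_zmod_eq_add_sum_Icc hN, ZMod.val_zero, Nat.cast_zero, mul_zero, zero_add]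
    refine sum_congr rfl fun y hy => ?_
    rw [hχ.eval_neg, cast_val_neg_natCast (by grind) (by grind), ZMod.val_cast_of_lt (by grind)]
    ring
  have hdouble : ∑ a : ZMod N, χ a * a.val =
      ∑ y ∈ Icc 1 ((N - 1) / 2), χ 2 * (χ y * (4 * y - N : R)) := by
    have htwo : ((2 : ℕ) : ZMod N) = 2 := Nat.cast_ofNat
    have hunit : IsUnit (2 : ZMod N) := htwo ▸ (ZMod.isUnit_iff_coprime 2 N).2 hN.coprime_two_left
    rw [← Equiv.sum_comp hunit.unit.mulLeft, sum_zmod_eq_add_sum_Icc hN]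
    simp only [Units.mulLeft_apply, IsUnit.unit_spec, mul_zero, ZMod.val_zero, Nat.cast_zero,
      zero_add]
    refine sum_congr rfl fun y hy => ?_
    have hval : ((2 * y : ZMod N).val : R) = 2 * y := by
      rw [← htwo, ← Nat.cast_mul, ZMod.val_cast_of_lt (by grind), Nat.cast_mul, Nat.cast_ofNat]
    have hval_neg : ((-(2 * y : ZMod N)).val : R) = N - 2 * y := by
      rw [← htwo, ← Nat.cast_mul, cast_val_neg_natCast (by grind) (by grind), Nat.cast_mul,
        Nat.cast_ofNat]
    rw [mul_neg, hχ.eval_neg, hval, hval_neg, map_mul]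
    ring
  nth_rewrite 1 [hdouble]
  rw [hfold, mul_sum, mul_sum, ← sum_add_distrib, mul_sum]
  exact sum_congr rfl fun y _ => by ring

theorem sum_eq_two_mul_sum_Icc_of_even [Nontrivial R] (hN : Odd N) (hN₁ : N ≠ 1)
    {χ : DirichletCharacter R N} (hχ : χ.Even) :
    ∑ a, χ a = 2 * ∑ y ∈ Icc 1 ((N - 1) / 2), χ y := by
  rw [sum_zmod_eq_add_sum_Icc hN, χ.map_zero' hN₁, zero_add, mul_sum]
  exact sum_congr rfl fun y _ => by rw [hχ.eval_neg, two_mul]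

end Folding

section HalfSum

variable {p : ℕ} [Fact p.Prime]

theorem sum_Icc_legendreChar_nonneg (hp : p % 4 = 3) :
    0 ≤ ∑ y ∈ Icc 1 ((p - 1) / 2), legendreChar ℝ p y := by
  have hT := sum_legendreChar_mul_val_nonpos hp
  have hfold := sum_mul_val_eq_of_odd (Nat.odd_iff.2 (by omega)) (legendreChar_odd ℝ hp)
  have hp₀ : (0 : ℝ) < p := Nat.cast_pos.2 (NeZero.pos p)
  have htwo : (2 : ZMod p) ≠ 0 := Ring.two_ne_zero (by rw [ZMod.ringChar_zmod_n]; omega)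
  refine nonneg_of_mul_nonneg_right ?_ hp₀
  rcases quadraticChar_dichotomy htwo with h | h <;>
    rw [legendreChar_apply 2, h] at hfold <;> push_cast at hfold <;> linarith

theorem sum_Icc_legendreChar_eq_zero (hp : p % 4 = 1) :
    ∑ y ∈ Icc 1 ((p - 1) / 2), legendreChar ℝ p y = 0 := by
  have hsum := sum_eq_two_mul_sum_Icc_of_even (Nat.odd_iff.2 (by omega))
    (Fact.out : p.Prime).ne_one (legendreChar_even ℝ hp)
  rw [MulChar.sum_eq_zero_of_ne_one (legendreChar_ne_one ℝ (by omega))] at hsum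
  simpa using hsum.symm

theorem exists_sq_modEq_iff_isSquare {n : ℕ} {y : ℤ} :
    (∃ x : ℤ, x ^ 2 ≡ y [ZMOD n]) ↔ IsSquare (y : ZMod n) := by
  simp only [isSquare_iff_exists_sq, ZMod.intCast_surjective.exists, ← Int.cast_pow,
    ZMod.intCast_eq_intCast_iff, Int.modEq_comm]

open scoped Classical in
theorem two_mul_card_filter_exists_sq_modEq {n : ℕ} (hn : n < p) :
    (2 * ((Icc 1 n).filter (fun y : ℕ => ∃ x : ℤ, x ^ 2 ≡ (y : ℤ) [ZMOD (p : ℤ)])).card : ℝ) =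
      n + ∑ y ∈ Icc 1 n, legendreChar ℝ p y := by
  have hχ : ∀ y ∈ Icc 1 n, legendreChar ℝ p y =
      2 * (if ∃ x : ℤ, x ^ 2 ≡ (y : ℤ) [ZMOD (p : ℤ)] then 1 else 0) - 1 := by
    intro y hy
    have hy₀ : (y : ZMod p) ≠ 0 := by
      rw [Ne, ZMod.natCast_eq_zero_iff]
      exact Nat.not_dvd_of_pos_of_lt (by grind) (by grind)
    rw [legendreChar_apply, exists_sq_modEq_iff_isSquare, Int.cast_natCast]
    split_ifs with hsq
    · rw [(quadraticChar_one_iff_isSquare hy₀).2 hsq]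
      norm_num
    · rw [quadraticChar_neg_one_iff_not_isSquare.2 hsq]
      norm_num
  rw [sum_congr rfl hχ, sum_sub_distrib, ← mul_sum, sum_boole, sum_const, Nat.card_Icc,
    nsmul_one, Nat.add_sub_cancel, add_sub_cancel]

end HalfSum

/- In the final statement `y` ranges over `ℤ`: there `Icc 1 ((p - 1) / 2) : Finset ℕ` is coerced to
`Finset ℤ` through the monad structure of `Finset`. -/
open scoped Classical in
theorem card_filter_bind_pure.{u} {α β : Type u} {f : α → β} (hf : f.Injective) (s : Finset α)
    (P : β → Prop) : #{b ∈ s >>= fun a => pure (f a) | P b} = #{a ∈ s | P (f a)} := by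
  have himage : (s >>= fun a => pure (f a)) = s.image f := sup_singleton_apply s f
  rw [himage, filter_image, card_image_of_injective _ hf]

end

open scoped Classical in
/-- For every odd prime `p`, the number `R_b(p)` of quadratic residues of `p` in
`[1, (p-1)/2]` satisfies `4·R_b(p) ≥ p - 1`; in particular `R_b(p) ≥ (p-1)/4`,
with equality exactly when `p ≡ 1 (mod 4)`. -/
theorem four_mul_small_residues_card_ge_of_odd_prime
    (p : ℕ) (hp : p.Prime) (hodd : Odd p) :
    p - 1 ≤ 4 * ((Finset.Icc 1 ((p - 1) / 2)).filter
        (fun y => ∃ x : ℤ, x ^ 2 ≡ (y : ℤ) [ZMOD (p : ℤ)])).card ∧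
    (p - 1) / 4 ≤ ((Finset.Icc 1 ((p - 1) / 2)).filter
        (fun y => ∃ x : ℤ, x ^ 2 ≡ (y : ℤ) [ZMOD (p : ℤ)])).card ∧
    (((Finset.Icc 1 ((p - 1) / 2)).filter
        (fun y => ∃ x : ℤ, x ^ 2 ≡ (y : ℤ) [ZMOD (p : ℤ)])).card = (p - 1) / 4 ↔
      p % 4 = 1) := by
  have : Fact p.Prime := ⟨hp⟩
  have hcount := two_mul_card_filter_exists_sq_modEq (p := p) (n := (p - 1) / 2)
    (by have := hp.pos; omega)
  rw [card_filter_bind_pure Nat.cast_injective]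
  rcases Nat.odd_mod_four_iff.1 (Nat.odd_iff.1 hodd) with h | h
  · rw [sum_Icc_legendreChar_eq_zero h, add_zero] at hcount
    norm_cast at hcount
    omega
  · have hhalf := hcount.symm ▸ le_add_of_nonneg_right (sum_Icc_legendreChar_nonneg h)
    norm_cast at hhalf
    omega
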